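/- Let C be an E∞-pair algebra, B a C-algebra with unit u: C → B, and let I_C(B) ⊆ h₀C be the kernel of the ring homomorphism h₀u: h₀C → h₀B. For x ∈ C_{n,0} whose class lies in I_C(B) and y ∈ B_{n,1} with ∂(y) = u₀(x), let θ_{(x,y)}: h₀B → h₁B be the degree-n derivation θ_{(x,y)}(a) = −y·ā + (−1)^{n·|a|} ā·y + x ⌣₁ ā. Then: (i) the class of θ_{(x,y)} modulo inner derivations is independent of the choice of y and depends only on the class of x in I_C(B); (ii) for z ∈ C_{m,0} representing c ∈ h₀C one has θ_{(z·x, u₀(z)·y)}(a) = (h₀u)(c)·θ_{(x,y)}(a) for all a ∈ h₀B; (iii) consequently the induced map θ: I_C(B)/I_C(B)² → Der(h₀B, h₁B)/Inn(h₀B, h₁B) is a well-defined h₀C-module homomorphism; and (iv) if B itself carries an E∞-pair algebra structure ⌣₁ᴮ, u is a morphism of E∞-pair algebras, and the external cup-one products are given by x̃ ⌣₁ x = u₀(x̃) ⌣₁ᴮ x and x ⌣₁ x̃ = x ⌣₁ᴮ u₀(x̃), then θ_{(x,y)} = 0 identically. -/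

import Mathlib

/-!
Write `[s, a] = s·a − (−1)^{|s||a|} a·s` for the graded commutator, so that
`θ_{(x,y)}(a) = x ⌣₁ a − [y, a]`. The axioms of a `C`-algebra say that `∂(z ⌣₁ a) = [u₀(z), a]` and
`∂(c) ⌣₁ a = [u₁(c), a]`, so `θ` compares two ways of measuring the commutativity of `u₀(x) = ∂(y)`
with `a`.

If `x − x' = ∂(c)`, then `θ_{(x,y)} − θ_{(x',y')}` is the commutator with the cycle
`u₁(c) − (y − y')`. Linearity holds because `z·x ⌣₁ a` and `[u₀(z)·y, a]` obey the same Leibniz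
rule, whose first terms agree since `(z ⌣₁ a)·∂(y) = ∂(z ⌣₁ a)·y`. Finally `θ` takes values in
cycles, which boundaries annihilate; so if `u₀(z)` is a boundary then `θ` vanishes on
`(z·w, u₀(z)·t)` whenever `∂(t) = u₀(w)`.
-/

/-- An ℕ-graded pair algebra: an ℕ-graded ring `B_{*,0}` (given by the family `B0` with
degreewise-defined multiplication `mul`), an ℕ-graded `B_{*,0}`-bimodule `B_{*,1}` (the
family `B1` with actions `smul`, `smulr`) and a bimodule homomorphism `∂ : B_{*,1} → B_{*,0}`
satisfying `∂(a)·b = a·∂(b)`.  Multiplications are indexed by a proof `p + q = r` recording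
the additivity of degrees. -/
structure PairAlgebra (B0 B1 : ℕ → Type*)
    [∀ n, AddCommGroup (B0 n)] [∀ n, AddCommGroup (B1 n)] where
  d : ∀ n, B1 n →+ B0 n
  mul : ∀ {p q r : ℕ}, p + q = r → B0 p → B0 q → B0 r
  smul : ∀ {p q r : ℕ}, p + q = r → B0 p → B1 q → B1 r
  smulr : ∀ {p q r : ℕ}, p + q = r → B1 p → B0 q → B1 r
  one : B0 0
  mul_add : ∀ {p q r : ℕ} (h : p + q = r) (x : B0 p) (y y' : B0 q),
    mul h x (y + y') = mul h x y + mul h x y'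
  add_mul : ∀ {p q r : ℕ} (h : p + q = r) (x x' : B0 p) (y : B0 q),
    mul h (x + x') y = mul h x y + mul h x' y
  smul_add : ∀ {p q r : ℕ} (h : p + q = r) (x : B0 p) (s s' : B1 q),
    smul h x (s + s') = smul h x s + smul h x s'
  add_smul : ∀ {p q r : ℕ} (h : p + q = r) (x x' : B0 p) (s : B1 q),
    smul h (x + x') s = smul h x s + smul h x' s
  smulr_add : ∀ {p q r : ℕ} (h : p + q = r) (s : B1 p) (x x' : B0 q),
    smulr h s (x + x') = smulr h s x + smulr h s x'
  add_smulr : ∀ {p q r : ℕ} (h : p + q = r) (s s' : B1 p) (x : B0 q),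
    smulr h (s + s') x = smulr h s x + smulr h s' x
  one_mul : ∀ {q : ℕ} (x : B0 q), mul (Nat.zero_add q) one x = x
  mul_one : ∀ {p : ℕ} (x : B0 p), mul rfl x one = x
  one_smul : ∀ {q : ℕ} (s : B1 q), smul (Nat.zero_add q) one s = s
  smulr_one : ∀ {p : ℕ} (s : B1 p), smulr rfl s one = s
  mul_assoc : ∀ {p q r : ℕ} (x : B0 p) (y : B0 q) (z : B0 r),
    mul rfl (mul rfl x y) z = mul (Nat.add_assoc p q r).symm x (mul rfl y z)
  mul_smul_assoc : ∀ {p q r : ℕ} (x : B0 p) (y : B0 q) (s : B1 r),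
    smul rfl (mul rfl x y) s = smul (Nat.add_assoc p q r).symm x (smul rfl y s)
  smul_smulr_assoc : ∀ {p q r : ℕ} (x : B0 p) (s : B1 q) (y : B0 r),
    smulr rfl (smul rfl x s) y = smul (Nat.add_assoc p q r).symm x (smulr rfl s y)
  smulr_mul_assoc : ∀ {p q r : ℕ} (s : B1 p) (y : B0 q) (z : B0 r),
    smulr rfl (smulr rfl s y) z = smulr (Nat.add_assoc p q r).symm s (mul rfl y z)
  d_smul : ∀ {p q r : ℕ} (h : p + q = r) (x : B0 p) (s : B1 q),
    d r (smul h x s) = mul h x (d q s)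
  d_smulr : ∀ {p q r : ℕ} (h : p + q = r) (s : B1 p) (x : B0 q),
    d r (smulr h s x) = mul h (d p s) x
  smul_d : ∀ {p q r : ℕ} (h : p + q = r) (s : B1 p) (t : B1 q),
    smul h (d p s) t = smulr h s (d q t)

variable {B0 B1 : ℕ → Type*} [∀ n, AddCommGroup (B0 n)] [∀ n, AddCommGroup (B1 n)]

/-- A cup-one product turning the pair algebra `A` into an E∞-pair algebra: an additive
operation `⌣₁ : B_{p,0} ⊗ B_{q,0} → B_{p+q,1}` measuring the commutativity of `A` and
satisfying the four laws of an E∞-pair algebra. -/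
structure EInftyCup (A : PairAlgebra B0 B1) where
  cup : ∀ {p q r : ℕ}, p + q = r → B0 p → B0 q → B1 r
  cup_add_left : ∀ {p q r : ℕ} (h : p + q = r) (x x' : B0 p) (y : B0 q),
    cup h (x + x') y = cup h x y + cup h x' y
  cup_add_right : ∀ {p q r : ℕ} (h : p + q = r) (x : B0 p) (y y' : B0 q),
    cup h x (y + y') = cup h x y + cup h x y'
  cup_comm_mul : ∀ {p q r : ℕ} (h : p + q = r) (x₁ : B0 p) (x₂ : B0 q),
    ((-1 : ℤ) ^ (p * q)) • A.mul ((Nat.add_comm q p).trans h) x₂ x₁ + A.d r (cup h x₁ x₂)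
      = A.mul h x₁ x₂
  cup_d : ∀ {p q r : ℕ} (h : p + q = r) (s : B1 p) (x₂ : B0 q),
    ((-1 : ℤ) ^ (p * q)) • A.smul ((Nat.add_comm q p).trans h) x₂ s + cup h (A.d p s) x₂
      = A.smulr h s x₂
  cup_skew : ∀ {p q r : ℕ} (h : p + q = r) (x₁ : B0 p) (x₂ : B0 q),
    ((-1 : ℤ) ^ (p * q)) • cup ((Nat.add_comm q p).trans h) x₂ x₁ + cup h x₁ x₂ = 0
  cup_mul : ∀ {p q r : ℕ} (x₁ : B0 p) (x₂ : B0 q) (x₃ : B0 r),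
    cup rfl (A.mul rfl x₁ x₂) x₃
      = ((-1 : ℤ) ^ (q * r)) •
          A.smulr (by omega : p + r + q = p + q + r) (cup rfl x₁ x₃) x₂
        + A.smul (by omega : p + (q + r) = p + q + r) x₁ (cup rfl x₂ x₃)

variable {C0 C1 A0 A1 : ℕ → Type*}
variable [∀ n, AddCommGroup (C0 n)] [∀ n, AddCommGroup (C1 n)]
variable [∀ n, AddCommGroup (A0 n)] [∀ n, AddCommGroup (A1 n)]

/-- An algebra `B` over an E∞-pair algebra `(C, Ccup)`: a pair algebra `B` together with a
unit morphism `u : C → B` of pair algebras and external cup-one products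
`⌣₁ : B_{n,0} × C_{m,0} → B_{n+m,1}` (`cupBC`) and `⌣₁ : C_{n,0} × B_{m,0} → B_{n+m,1}`
(`cupCB`), additive in each variable, satisfying the seven compatibility laws. -/
structure CAlgebra (C : PairAlgebra C0 C1) (Ccup : EInftyCup C)
    (B : PairAlgebra A0 A1) where
  u0 : ∀ n, C0 n →+ A0 n
  u1 : ∀ n, C1 n →+ A1 n
  u_d : ∀ (n : ℕ) (s : C1 n), B.d n (u1 n s) = u0 n (C.d n s)
  u0_one : u0 0 C.one = B.one
  u0_mul : ∀ {p q r : ℕ} (h : p + q = r) (x : C0 p) (y : C0 q),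
    u0 r (C.mul h x y) = B.mul h (u0 p x) (u0 q y)
  u1_smul : ∀ {p q r : ℕ} (h : p + q = r) (x : C0 p) (s : C1 q),
    u1 r (C.smul h x s) = B.smul h (u0 p x) (u1 q s)
  u1_smulr : ∀ {p q r : ℕ} (h : p + q = r) (s : C1 p) (x : C0 q),
    u1 r (C.smulr h s x) = B.smulr h (u1 p s) (u0 q x)
  cupBC : ∀ {p q r : ℕ}, p + q = r → A0 p → C0 q → A1 r
  cupCB : ∀ {p q r : ℕ}, p + q = r → C0 p → A0 q → A1 r
  cupBC_add_left : ∀ {p q r : ℕ} (h : p + q = r) (x x' : A0 p) (y : C0 q),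
    cupBC h (x + x') y = cupBC h x y + cupBC h x' y
  cupBC_add_right : ∀ {p q r : ℕ} (h : p + q = r) (x : A0 p) (y y' : C0 q),
    cupBC h x (y + y') = cupBC h x y + cupBC h x y'
  cupCB_add_left : ∀ {p q r : ℕ} (h : p + q = r) (x x' : C0 p) (y : A0 q),
    cupCB h (x + x') y = cupCB h x y + cupCB h x' y
  cupCB_add_right : ∀ {p q r : ℕ} (h : p + q = r) (x : C0 p) (y y' : A0 q),
    cupCB h x (y + y') = cupCB h x y + cupCB h x y'
  -- u₁(x̃₁ ⌣₁ x̃₂) = u₀(x̃₁) ⌣₁ x̃₂ = x̃₁ ⌣₁ u₀(x̃₂)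
  u_cup_BC : ∀ {p q r : ℕ} (h : p + q = r) (x : C0 p) (y : C0 q),
    u1 r (Ccup.cup h x y) = cupBC h (u0 p x) y
  u_cup_CB : ∀ {p q r : ℕ} (h : p + q = r) (x : C0 p) (y : C0 q),
    u1 r (Ccup.cup h x y) = cupCB h x (u0 q y)
  -- (−1)^{pq} x₂·u₀(x̃₁) + ∂(x̃₁ ⌣₁ x₂) = u₀(x̃₁)·x₂
  loes : ∀ {p q r : ℕ} (h : p + q = r) (xt : C0 p) (x : A0 q),
    ((-1 : ℤ) ^ (p * q)) • B.mul ((Nat.add_comm q p).trans h) x (u0 p xt)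
      + B.d r (cupCB h xt x) = B.mul h (u0 p xt) x
  -- (−1)^{pq} u₀(x̃₂)·s + ∂(s) ⌣₁ x̃₂ = s·u₀(x̃₂)
  biende : ∀ {p q r : ℕ} (h : p + q = r) (s : A1 p) (xt : C0 q),
    ((-1 : ℤ) ^ (p * q)) • B.smul ((Nat.add_comm q p).trans h) (u0 q xt) s
      + cupBC h (B.d p s) xt = B.smulr h s (u0 q xt)
  -- (−1)^{pq} x₂·u₁(s̃) + ∂(s̃) ⌣₁ x₂ = u₁(s̃)·x₂
  node : ∀ {p q r : ℕ} (h : p + q = r) (st : C1 p) (x : A0 q),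
    ((-1 : ℤ) ^ (p * q)) • B.smul ((Nat.add_comm q p).trans h) x (u1 p st)
      + cupCB h (C.d p st) x = B.smulr h (u1 p st) x
  -- (−1)^{pq} x₂ ⌣₁ x̃₁ + x̃₁ ⌣₁ x₂ = 0
  comi : ∀ {p q r : ℕ} (h : p + q = r) (xt : C0 p) (x : A0 q),
    ((-1 : ℤ) ^ (p * q)) • cupBC ((Nat.add_comm q p).trans h) x xt + cupCB h xt x = 0
  -- (x̃₁·x̃₂) ⌣₁ x₃ = (−1)^{qr} (x̃₁ ⌣₁ x₃)·u₀(x̃₂) + u₀(x̃₁)·(x̃₂ ⌣₁ x₃)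
  otrolin : ∀ {p q r : ℕ} (x₁ : C0 p) (x₂ : C0 q) (x₃ : A0 r),
    cupCB rfl (C.mul rfl x₁ x₂) x₃
      = ((-1 : ℤ) ^ (q * r)) •
          B.smulr (by omega : p + r + q = p + q + r) (cupCB rfl x₁ x₃) (u0 q x₂)
        + B.smul (by omega : p + (q + r) = p + q + r) (u0 p x₁) (cupCB rfl x₂ x₃)
  -- (x₁·x₂) ⌣₁ x̃₃ = (−1)^{qr} (x₁ ⌣₁ x̃₃)·x₂ + x₁·(x₂ ⌣₁ x̃₃)
  isder : ∀ {p q r : ℕ} (x₁ : A0 p) (x₂ : A0 q) (x₃ : C0 r),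
    cupBC rfl (B.mul rfl x₁ x₂) x₃
      = ((-1 : ℤ) ^ (q * r)) •
          B.smulr (by omega : p + r + q = p + q + r) (cupBC rfl x₁ x₃) x₂
        + B.smul (by omega : p + (q + r) = p + q + r) x₁ (cupBC rfl x₂ x₃)

variable {C : PairAlgebra C0 C1} {Ccup : EInftyCup C} {B : PairAlgebra A0 A1}

/-- The map `θ_{(x,y)}` on representatives:
`θ_{(x,y)}(ā) = −y·ā + (−1)^{n·|ā|} ā·y + x ⌣₁ ā`. -/
def theta (CA : CAlgebra C Ccup B) (n : ℕ) (x : C0 n) (y : A1 n)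
    (k : ℕ) (ab : A0 k) : A1 (n + k) :=
  -(B.smulr rfl y ab) + ((-1 : ℤ) ^ (n * k)) • B.smul (Nat.add_comm k n) ab y
    + CA.cupCB rfl x ab

/-- Two degree-`n` maps `θ₁, θ₂ : h₀B → h₁B` (given on representatives) differ by an inner
derivation: there is a homogeneous `m ∈ h₁B_n` with
`θ₁(a) − θ₂(a) = m·a − (−1)^{|m||a|} a·m`. -/
def differByInner (B : PairAlgebra A0 A1) (n : ℕ)
    (θ₁ θ₂ : ∀ k : ℕ, A0 k → A1 (n + k)) : Prop :=
  ∃ m : A1 n, B.d n m = 0 ∧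
    ∀ (k : ℕ) (ab : A0 k),
      θ₁ k ab - θ₂ k ab =
        B.smulr rfl m ab - ((-1 : ℤ) ^ (n * k)) • B.smul (Nat.add_comm k n) ab m

/-- Homogeneous degree-`n` products of two homogeneous elements of the ideal
`I_C(B) = Ker (h₀u)` (on representatives: `u₀` of the element is a boundary in `B`).
The additive closure of this set, together with boundaries, represents `I_C(B)²`. -/
def IsqSet (CA : CAlgebra C Ccup B) (n : ℕ) : Set (C0 n) :=
  {v | ∃ (i j : ℕ) (h : i + j = n) (z : C0 i) (w : C0 j),
    (∃ s : A1 i, B.d i s = CA.u0 i z) ∧ (∃ t : A1 j, B.d j t = CA.u0 j w) ∧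
    v = C.mul h z w}

namespace PairAlgebra

variable (B) {p q r : ℕ}

/-- The left action `B_{p,0} × B_{q,1} → B_{p+q,1}` as a biadditive map. -/
def smulHom (h : p + q = r) : A0 p →+ A1 q →+ A1 r :=
  AddMonoidHom.mk' (fun x => AddMonoidHom.mk' (B.smul h x) (B.smul_add h x))
    fun x x' => AddMonoidHom.ext (B.add_smul h x x')

protected theorem smul_sub (h : p + q = r) (x : A0 p) (s s' : A1 q) :
    B.smul h x (s - s') = B.smul h x s - B.smul h x s' :=
  map_sub (B.smulHom h x) s s'

protected theorem smul_zsmul (h : p + q = r) (x : A0 p) (c : ℤ) (s : A1 q) :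
    B.smul h x (c • s) = c • B.smul h x s :=
  map_zsmul (B.smulHom h x) c s

protected theorem sub_smul (h : p + q = r) (x x' : A0 p) (s : A1 q) :
    B.smul h (x - x') s = B.smul h x s - B.smul h x' s :=
  map_sub ((B.smulHom h).flip s) x x'

protected theorem zsmul_smul (h : p + q = r) (c : ℤ) (x : A0 p) (s : A1 q) :
    B.smul h (c • x) s = c • B.smul h x s :=
  map_zsmul ((B.smulHom h).flip s) c x

protected theorem smulr_zero (h : p + q = r) (s : A1 p) : B.smulr h s 0 = 0 := by
  simpa only [add_zero, left_eq_add] using B.smulr_add h s 0 0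

protected theorem mul_smul {pq qr t : ℕ} (hpq : p + q = pq) (hpq_r : pq + r = t)
    (hqr : q + r = qr) (hp_qr : p + qr = t) (x : A0 p) (y : A0 q) (s : A1 r) :
    B.smul hpq_r (B.mul hpq x y) s = B.smul hp_qr x (B.smul hqr y s) := by
  subst hpq hqr hpq_r
  exact B.mul_smul_assoc x y s

/-- The graded commutator `x·a − (−1)^{pq} a·x` in the ring `B_{*,0}`. -/
def commutator (h : p + q = r) (x : A0 p) (a : A0 q) : A0 r :=
  B.mul h x a - ((-1 : ℤ) ^ (p * q)) • B.mul ((Nat.add_comm q p).trans h) a x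

/-- The graded commutator `s·a − (−1)^{pq} a·s` of an element `s` of the bimodule `B_{*,1}` with a
ring element `a`; for a cycle `s` it is the inner derivation given by `s`. -/
def actionCommutator (h : p + q = r) (s : A1 p) (a : A0 q) : A1 r :=
  B.smulr h s a - ((-1 : ℤ) ^ (p * q)) • B.smul ((Nat.add_comm q p).trans h) a s

theorem d_actionCommutator (h : p + q = r) (s : A1 p) (a : A0 q) :
    B.d r (B.actionCommutator h s a) = B.commutator h (B.d p s) a := by
  simp only [actionCommutator, commutator, map_sub, map_zsmul, B.d_smulr, B.d_smul]

theorem actionCommutator_add (h : p + q = r) (s s' : A1 p) (a : A0 q) :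
    B.actionCommutator h (s + s') a = B.actionCommutator h s a + B.actionCommutator h s' a := by
  simp only [actionCommutator, B.add_smulr, B.smul_add, _root_.smul_add]
  abel

theorem actionCommutator_sub (h : p + q = r) (s s' : A1 p) (a : A0 q) :
    B.actionCommutator h (s - s') a = B.actionCommutator h s a - B.actionCommutator h s' a :=
  eq_sub_of_add_eq (by rw [← actionCommutator_add, sub_add_cancel])

theorem actionCommutator_smul (x : A0 p) (s : A1 q) (a : A0 r) :
    B.actionCommutator rfl (B.smul rfl x s) a
      = ((-1 : ℤ) ^ (q * r)) •
          B.smul (Nat.add_right_comm p r q) (B.commutator rfl x a) s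
        + B.smul (Nat.add_assoc p q r).symm x (B.actionCommutator rfl s a) := by
  have sign : (-1 : ℤ) ^ ((p + q) * r) = (-1) ^ (q * r) * (-1) ^ (p * r) := by
    rw [← pow_add, ← Nat.add_mul, Nat.add_comm q p]
  have xa_smul : B.smul (Nat.add_right_comm p r q) (B.mul rfl x a) s
      = B.smul (Nat.add_assoc p q r).symm x (B.smul (Nat.add_comm r q) a s) :=
    B.mul_smul ..
  have ax_smul : B.smul (Nat.add_right_comm p r q) (B.mul (Nat.add_comm r p) a x) s
      = B.smul (Nat.add_comm r (p + q)) a (B.smul rfl x s) :=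
    B.mul_smul ..
  simp only [actionCommutator, commutator, B.sub_smul, B.zsmul_smul, B.smul_sub, B.smul_zsmul,
    B.smul_smulr_assoc, xa_smul, ax_smul, smul_sub, smul_smul, sign]
  abel

theorem d_smul_eq_zero (h : p + q = r) (s : A1 p) {t : A1 q} (ht : B.d q t = 0) :
    B.smul h (B.d p s) t = 0 := by
  rw [B.smul_d, ht, B.smulr_zero]

end PairAlgebra

theorem EInftyCup.cup_d_eq_actionCommutator (Bcup : EInftyCup B) {p q r : ℕ} (h : p + q = r)
    (s : A1 p) (a : A0 q) : Bcup.cup h (B.d p s) a = B.actionCommutator h s a :=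
  eq_sub_of_add_eq' (Bcup.cup_d h s a)

namespace CAlgebra

variable (CA : CAlgebra C Ccup B) {p q r : ℕ}

theorem d_cupCB (h : p + q = r) (x : C0 p) (a : A0 q) :
    B.d r (CA.cupCB h x a) = B.commutator h (CA.u0 p x) a :=
  eq_sub_of_add_eq' (CA.loes h x a)

theorem cupCB_d (h : p + q = r) (c : C1 p) (a : A0 q) :
    CA.cupCB h (C.d p c) a = B.actionCommutator h (CA.u1 p c) a :=
  eq_sub_of_add_eq' (CA.node h c a)

end CAlgebra

section Theta

variable (CA : CAlgebra C Ccup B) {m n : ℕ}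

theorem theta_eq_cupCB_sub_actionCommutator (x : C0 n) (y : A1 n) (k : ℕ) (a : A0 k) :
    theta CA n x y k a = CA.cupCB rfl x a - B.actionCommutator rfl y a := by
  rw [theta, PairAlgebra.actionCommutator]
  abel

theorem theta_add (x x' : C0 n) (y y' : A1 n) (k : ℕ) (a : A0 k) :
    theta CA n (x + x') (y + y') k a = theta CA n x y k a + theta CA n x' y' k a := by
  simp only [theta_eq_cupCB_sub_actionCommutator, CA.cupCB_add_left, B.actionCommutator_add,
    add_sub_add_comm]

/-- `θ_{(x,y)}(a)` for fixed `a`, as an additive map in the pair `(x, y)`. -/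
def thetaHom (n k : ℕ) (a : A0 k) : C0 n × A1 n →+ A1 (n + k) :=
  AddMonoidHom.mk' (fun xy => theta CA n xy.1 xy.2 k a)
    fun xy xy' => theta_add CA xy.1 xy'.1 xy.2 xy'.2 k a

theorem theta_sub (x x' : C0 n) (y y' : A1 n) (k : ℕ) (a : A0 k) :
    theta CA n (x - x') (y - y') k a = theta CA n x y k a - theta CA n x' y' k a :=
  map_sub (thetaHom CA n k a) (x, y) (x', y')

theorem d_theta {x : C0 n} {y : A1 n} (hy : B.d n y = CA.u0 n x) (k : ℕ) (a : A0 k) :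
    B.d (n + k) (theta CA n x y k a) = 0 := by
  rw [theta_eq_cupCB_sub_actionCommutator, map_sub, CA.d_cupCB, B.d_actionCommutator, hy, sub_self]

theorem theta_d_left (c : C1 n) (y : A1 n) (k : ℕ) (a : A0 k) :
    theta CA n (C.d n c) y k a = B.actionCommutator rfl (CA.u1 n c - y) a := by
  rw [theta_eq_cupCB_sub_actionCommutator, CA.cupCB_d, B.actionCommutator_sub]

theorem theta_mul (z : C0 m) {x : C0 n} {y : A1 n} (hy : B.d n y = CA.u0 n x)
    (k : ℕ) (a : A0 k) :
    theta CA (m + n) (C.mul rfl z x) (B.smul rfl (CA.u0 m z) y) k a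
      = B.smul (Nat.add_assoc m n k).symm (CA.u0 m z) (theta CA n x y k a) := by
  have cup_smulr : B.smulr (Nat.add_right_comm m k n) (CA.cupCB rfl z a) (CA.u0 n x)
      = B.smul (Nat.add_right_comm m k n) (B.commutator rfl (CA.u0 m z) a) y := by
    rw [← hy, ← B.smul_d, CA.d_cupCB]
  rw [theta_eq_cupCB_sub_actionCommutator, CA.otrolin, B.actionCommutator_smul, cup_smulr,
    add_sub_add_left_eq_sub, ← B.smul_sub, ← theta_eq_cupCB_sub_actionCommutator]

theorem differByInner_theta {x x' : C0 n} {y y' : A1 n} {c : C1 n}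
    (hy : B.d n y = CA.u0 n x) (hy' : B.d n y' = CA.u0 n x') (hc : C.d n c = x - x') :
    differByInner B n (theta CA n x y) (theta CA n x' y') := by
  refine ⟨CA.u1 n c - (y - y'), ?_, fun k a => ?_⟩
  · rw [map_sub, map_sub, CA.u_d, hc, hy, hy', map_sub, sub_self]
  · rw [← theta_sub, ← hc, theta_d_left, PairAlgebra.actionCommutator]

/-- The pairs `(x, y)` with `∂(y) = u₀(x)` and `θ_{(x,y)} = 0`. -/
def thetaNullPairs (n : ℕ) : AddSubgroup (C0 n × A1 n) :=
  ((B.d n).comp (AddMonoidHom.snd _ _)).eqLocus ((CA.u0 n).comp (AddMonoidHom.fst _ _)) ⊓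
    ⨅ (k : ℕ) (a : A0 k), (thetaHom CA n k a).ker

theorem mem_thetaNullPairs {x : C0 n} {y : A1 n} :
    (x, y) ∈ thetaNullPairs CA n ↔
      B.d n y = CA.u0 n x ∧ ∀ (k : ℕ) (a : A0 k), theta CA n x y k a = 0 := by
  simp only [thetaNullPairs, AddSubgroup.mem_inf, AddSubgroup.mem_iInf, AddMonoidHom.mem_ker]
  rfl

theorem mul_smul_mem_thetaNullPairs {z : C0 m} {w : C0 n} {s : A1 m} {t : A1 n}
    (hs : B.d m s = CA.u0 m z) (ht : B.d n t = CA.u0 n w) :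
    (C.mul rfl z w, B.smul rfl (CA.u0 m z) t) ∈ thetaNullPairs CA (m + n) := by
  refine (mem_thetaNullPairs CA).2 ⟨by rw [B.d_smul, ht, CA.u0_mul], fun k a => ?_⟩
  rw [theta_mul CA z ht, ← hs, B.d_smul_eq_zero _ s (d_theta CA ht k a)]

theorem closure_isqSet_le_map_thetaNullPairs (n : ℕ) :
    AddSubgroup.closure (IsqSet CA n) ≤ (thetaNullPairs CA n).map (AddMonoidHom.fst _ _) := by
  rw [AddSubgroup.closure_le]
  rintro _ ⟨i, j, rfl, z, w, ⟨s, hs⟩, ⟨t, ht⟩, rfl⟩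
  exact ⟨_, mul_smul_mem_thetaNullPairs CA hs ht, rfl⟩

theorem differByInner_theta_zero {x : C0 n} {y : A1 n} (hy : B.d n y = CA.u0 n x)
    (hx : x ∈ AddSubgroup.closure (IsqSet CA n) ⊔ (C.d n).range) :
    differByInner B n (theta CA n x y) fun _ _ => 0 := by
  obtain ⟨v, hv, _, ⟨c, rfl⟩, rfl⟩ := AddSubgroup.mem_sup.mp hx
  obtain ⟨⟨_, y'⟩, hvy', rfl⟩ := closure_isqSet_le_map_thetaNullPairs CA n hv
  obtain ⟨hy', theta_zero⟩ := (mem_thetaNullPairs CA).1 hvy'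
  have theta_eq : theta CA n _ y' = fun _ _ => 0 := funext₂ theta_zero
  rw [← theta_eq]
  exact differByInner_theta CA hy hy' (add_sub_cancel_left _ _).symm

theorem theta_eq_zero_of_cupCB_eq_cup (Bcup : EInftyCup B) {x : C0 n} {y : A1 n}
    (hy : B.d n y = CA.u0 n x) {k : ℕ} {a : A0 k}
    (hcup : CA.cupCB rfl x a = Bcup.cup rfl (CA.u0 n x) a) : theta CA n x y k a = 0 := by
  rw [theta_eq_cupCB_sub_actionCommutator, hcup, ← hy, Bcup.cup_d_eq_actionCommutator, sub_self]

end Theta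

/-- properties of `θ : I_C(B)/I_C(B)² → HH¹(h₀B, h₁B)`:
(i) the class of `θ_{(x,y)}` modulo inner derivations depends only on the class of `x`;
(ii) `θ_{(z·x, u₀(z)·y)}(a) = (h₀u)(z)·θ_{(x,y)}(a)`, so `θ` is `h₀C`-linear;
(iii) `θ` vanishes on `I_C(B)²`, and is additive, so it is a well-defined `h₀C`-module
homomorphism `I_C(B)/I_C(B)² → Der/Inn`;
(iv) if `B` carries an E∞-structure through which `u` and the external cup-one products
factor, then `θ_{(x,y)} = 0` identically. -/
theorem cAlgebra_theta_hochschild (CA : CAlgebra C Ccup B) (n : ℕ) :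
    -- (i) independence of the choices of `y` and of the representative `x`
    (∀ (x x' : C0 n) (y y' : A1 n) (ct : C1 n),
      B.d n y = CA.u0 n x → B.d n y' = CA.u0 n x' → C.d n ct = x - x' →
      differByInner B n (theta CA n x y) (theta CA n x' y')) ∧
    -- (ii) h₀C-linearity
    (∀ (m : ℕ) (z : C0 m) (x : C0 n) (y : A1 n), B.d n y = CA.u0 n x →
      ∀ (k : ℕ) (ab : A0 k),
        theta CA (m + n) (C.mul rfl z x) (B.smul rfl (CA.u0 m z) y) k ab
          = B.smul (by omega : m + (n + k) = m + n + k) (CA.u0 m z)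
              (theta CA n x y k ab)) ∧
    -- (iii) vanishing on I_C(B)² (together with (i), (ii) and additivity this makes θ a
    -- well-defined h₀C-module homomorphism I_C(B)/I_C(B)² → Der/Inn)
    (∀ (x : C0 n) (y : A1 n), B.d n y = CA.u0 n x →
      x ∈ AddSubgroup.closure (IsqSet CA n) ⊔ (C.d n).range →
      differByInner B n (theta CA n x y) (fun _ _ => 0)) ∧
    (∀ (x x' : C0 n) (y y' : A1 n), B.d n y = CA.u0 n x → B.d n y' = CA.u0 n x' →
      ∀ (k : ℕ) (ab : A0 k),
        theta CA n (x + x') (y + y') k ab = theta CA n x y k ab + theta CA n x' y' k ab) ∧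
    -- (iv) vanishing in the E∞ case
    (∀ Bcup : EInftyCup B,
      (∀ (p q r : ℕ) (h : p + q = r) (xt : C0 p) (yt : C0 q),
        CA.u1 r (Ccup.cup h xt yt) = Bcup.cup h (CA.u0 p xt) (CA.u0 q yt)) →
      (∀ (p q r : ℕ) (h : p + q = r) (xt : C0 p) (a : A0 q),
        CA.cupCB h xt a = Bcup.cup h (CA.u0 p xt) a) →
      (∀ (p q r : ℕ) (h : p + q = r) (a : A0 p) (xt : C0 q),
        CA.cupBC h a xt = Bcup.cup h a (CA.u0 q xt)) →
      ∀ (x : C0 n) (y : A1 n), B.d n y = CA.u0 n x →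
        ∀ (k : ℕ) (ab : A0 k), theta CA n x y k ab = 0) := by
  exact ⟨fun _ _ _ _ _ hy hy' hc => differByInner_theta CA hy hy' hc,
    fun _ z _ _ hy k a => theta_mul CA z hy k a,
    fun _ _ hy hx => differByInner_theta_zero CA hy hx,
    fun x x' y y' _ _ k a => theta_add CA x x' y y' k a,
    fun Bcup _ hCB _ x _ hy _ a =>
      theta_eq_zero_of_cupCB_eq_cup CA Bcup hy (hCB _ _ _ rfl x a)⟩
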